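/- arXiv:2308.05588 — 8 statements merged into one kernel-verified Lean document; each statement's English description precedes it below -/
import Mathlib

section
/- If φ₁ over X₁ and φ₂ over X₂ are independent Boolean functions (X₁ ∩ X₂ = ∅) and x ∈ X₁, then Banzhaf(φ₁ ∧ φ₂, x) = Banzhaf(φ₁, x) · #φ₂. -/
open Finset

variable {V : Type*} [DecidableEq V]

/-- Number of models of a Boolean function `φ` over variable set `X`:
subsets `Y ⊆ X` with `φ Y = true`. -/
def modelCount (X : Finset V) (φ : Finset V → Bool) : ℕ :=
  (X.powerset.filter fun Y => φ Y).card

/-- Banzhaf value of variable `x` in the Boolean function `φ` over variable set `X`. -/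
def banzhaf (X : Finset V) (φ : Finset V → Bool) (x : V) : ℤ :=
  ∑ Y ∈ (X \ {x}).powerset,
    ((if φ (insert x Y) then 1 else 0) - (if φ Y then 1 else 0) : ℤ)

/-- For independent φ₁ over X₁ and φ₂ over X₂ with x ∈ X₁:
Banzhaf(φ₁ ∧ φ₂, x) = Banzhaf(φ₁, x) · #φ₂. -/
theorem banzhaf_and_independent (X₁ X₂ : Finset V) (φ₁ φ₂ : Finset V → Bool)
    (x : V) (hx : x ∈ X₁) (h : Disjoint X₁ X₂) :
    banzhaf (X₁ ∪ X₂) (fun Y => φ₁ (Y ∩ X₁) && φ₂ (Y ∩ X₂)) x =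
      banzhaf X₁ φ₁ x * (modelCount X₂ φ₂ : ℤ) := by
  have hx2 : x ∉ X₂ := fun h2 => (Finset.disjoint_left.mp h) hx h2
  unfold banzhaf modelCount
  rw [Finset.card_filter, Nat.cast_sum, Finset.sum_mul_sum, ← Finset.sum_product']
  symm
  have hd : ∀ a, a ∈ X₁ → a ∉ X₂ := fun a ha => Finset.disjoint_left.mp h ha
  have e1 : ∀ A B : Finset V, A ⊆ X₁ → B ⊆ X₂ → (A ∪ B) ∩ X₁ = A := by
    intro A B hA hB
    ext a
    have h1 := @hA a
    have h2 := @hB a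
    have h3 := hd a
    simp only [Finset.mem_inter, Finset.mem_union]
    tauto
  have e2 : ∀ A B : Finset V, A ⊆ X₁ → B ⊆ X₂ → (A ∪ B) ∩ X₂ = B := by
    intro A B hA hB
    ext a
    have h1 := @hA a
    have h2 := @hB a
    have h3 := hd a
    simp only [Finset.mem_inter, Finset.mem_union]
    tauto
  refine Finset.sum_bij' (fun p _ => p.1 ∪ p.2) (fun Y _ => (Y ∩ X₁, Y ∩ X₂)) ?_ ?_ ?_ ?_ ?_
  · rintro ⟨A, B⟩ hp
    simp only [Finset.mem_product, Finset.mem_powerset] at hp ⊢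
    intro a ha
    have h1 := @hp.1 a
    have h2 := @hp.2 a
    simp only [Finset.mem_union, Finset.mem_sdiff, Finset.mem_singleton] at *
    rcases ha with ha | ha
    · exact ⟨Or.inl (h1 ha).1, (h1 ha).2⟩
    · exact ⟨Or.inr (h2 ha), fun e => hx2 (e ▸ h2 ha)⟩
  · intro Y hY
    simp only [Finset.mem_product, Finset.mem_powerset] at hY ⊢
    refine ⟨fun a ha => ?_, Finset.inter_subset_right⟩
    have h1 := @hY a
    simp only [Finset.mem_union, Finset.mem_sdiff, Finset.mem_inter] at *
    tauto
  · rintro ⟨A, B⟩ hp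
    simp only [Finset.mem_product, Finset.mem_powerset] at hp
    have hA := hp.1.trans Finset.sdiff_subset
    simp only [e1 A B hA hp.2, e2 A B hA hp.2]
  · intro Y hY
    simp only [Finset.mem_powerset] at hY
    rw [← Finset.inter_union_distrib_left]
    exact Finset.inter_eq_left.mpr (hY.trans Finset.sdiff_subset)
  · rintro ⟨A, B⟩ hp
    simp only [Finset.mem_product, Finset.mem_powerset] at hp
    have hA := hp.1.trans Finset.sdiff_subset
    have hA' : insert x A ⊆ X₁ := Finset.insert_subset hx hA
    simp only [← Finset.insert_union, e1 A B hA hp.2, e2 A B hA hp.2,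
      e1 _ B hA' hp.2, e2 _ B hA' hp.2]
    cases φ₁ (insert x A) <;> cases φ₁ A <;> cases φ₂ B <;> simp
end

section
/- If φ₁ over X₁ and φ₂ over X₂ are independent Boolean functions (X₁ ∩ X₂ = ∅), x ∈ X₁, and n₂ = |X₂|, then Banzhaf(φ₁ ∨ φ₂, x) = Banzhaf(φ₁, x) · (2^{n₂} − #φ₂). -/
open Finset

variable {V : Type*} [DecidableEq V]

/-- For independent φ₁ over X₁ and φ₂ over X₂ with x ∈ X₁:
Banzhaf(φ₁ ∨ φ₂, x) = Banzhaf(φ₁, x) · (2^{n₂} − #φ₂). -/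
theorem banzhaf_or_independent (X₁ X₂ : Finset V) (φ₁ φ₂ : Finset V → Bool)
    (x : V) (hx : x ∈ X₁) (h : Disjoint X₁ X₂) :
    banzhaf (X₁ ∪ X₂) (fun Y => φ₁ (Y ∩ X₁) || φ₂ (Y ∩ X₂)) x =
      banzhaf X₁ φ₁ x * (2 ^ X₂.card - (modelCount X₂ φ₂ : ℤ)) := by
  have hcount : (2 ^ X₂.card - (modelCount X₂ φ₂ : ℤ)) =
      ∑ Z ∈ X₂.powerset, (1 - (if φ₂ Z then 1 else 0) : ℤ) := by
    rw [Finset.sum_sub_distrib, modelCount, Finset.sum_boole]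
    simp
  rw [hcount, banzhaf, banzhaf, Finset.sum_mul_sum, ← Finset.sum_product']
  have hd : ∀ a, a ∈ X₁ → a ∉ X₂ := fun a h1 h2 => Finset.disjoint_left.mp h h1 h2
  refine Finset.sum_nbij' (fun Y => (Y ∩ X₁, Y ∩ X₂)) (fun p => p.1 ∪ p.2) ?_ ?_ ?_ ?_ ?_
  · intro Y hY
    simp only [Finset.mem_product, Finset.mem_powerset, Finset.subset_iff, Finset.mem_sdiff,
      Finset.mem_union, Finset.mem_inter, Finset.mem_singleton] at hY ⊢
    grind
  · rintro ⟨A, B⟩ hY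
    simp only [Finset.mem_product, Finset.mem_powerset, Finset.subset_iff, Finset.mem_sdiff,
      Finset.mem_union, Finset.mem_singleton] at hY ⊢
    grind
  · intro Y hY
    simp only [Finset.mem_powerset, Finset.subset_iff, Finset.mem_sdiff,
      Finset.mem_union, Finset.mem_singleton] at hY
    ext a
    simp only [Finset.mem_union, Finset.mem_inter]
    grind
  · rintro ⟨A, B⟩ hY
    simp only [Finset.mem_product, Finset.mem_powerset, Finset.subset_iff, Finset.mem_sdiff,
      Finset.mem_singleton] at hY
    ext a
    · simp only [Finset.mem_union, Finset.mem_inter]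
      grind
    · simp only [Finset.mem_union, Finset.mem_inter]
      grind
  · intro Y hY
    have e1 : insert x Y ∩ X₁ = insert x (Y ∩ X₁) := Finset.insert_inter_of_mem hx
    have e2 : insert x Y ∩ X₂ = Y ∩ X₂ := Finset.insert_inter_of_notMem (hd x hx)
    simp only [e1, e2]
    cases φ₁ (insert x (Y ∩ X₁)) <;> cases φ₁ (Y ∩ X₁) <;> cases φ₂ (Y ∩ X₂) <;> simp
end

section
/- If φ₁ and φ₂ are mutually exclusive Boolean functions over the same variable set X (no subset of X is a model of both), then for every x ∈ X, Banzhaf(φ₁ ∨ φ₂, x) = Banzhaf(φ₁, x) + Banzhaf(φ₂, x). -/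
open Finset

variable {V : Type*} [DecidableEq V]

/-- For mutually exclusive φ₁ and φ₂ over the same variable set X and x ∈ X:
Banzhaf(φ₁ ∨ φ₂, x) = Banzhaf(φ₁, x) + Banzhaf(φ₂, x). -/
theorem banzhaf_or_mutually_exclusive (X : Finset V) (φ₁ φ₂ : Finset V → Bool)
    (h : ∀ Y ⊆ X, ¬(φ₁ Y = true ∧ φ₂ Y = true)) (x : V) (hx : x ∈ X) :
    banzhaf X (fun Y => φ₁ Y || φ₂ Y) x =
      banzhaf X φ₁ x + banzhaf X φ₂ x := by
  unfold banzhaf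
  rw [← Finset.sum_add_distrib]
  refine Finset.sum_congr rfl fun Y hY => ?_
  have hY' : Y ⊆ X := (Finset.mem_powerset.mp hY).trans Finset.sdiff_subset
  have h1 := h Y hY'
  have h2 := h (insert x Y) (Finset.insert_subset hx hY')
  revert h1 h2
  beta_reduce
  cases φ₁ Y <;> cases φ₂ Y <;> cases φ₁ (insert x Y) <;> cases φ₂ (insert x Y) <;> simp
end

section
/- Let φ be a positive DNF over a finite variable set X with clause set C, and let x ∈ X with {x} ∉ C (so all clauses of φ[x:=1] are nonempty). Suppose: L₁ is the positive DNF over the union of a set of pairwise disjoint clauses of φ[x:=1], with those clauses as its clause set; L₀ is defined likewise from φ[x:=0]; U₁ is a positive DNF over X \ {x} such that every clause of φ[x:=1] contains some clause of U₁; and U₀ is defined likewise from φ[x:=0]. Then #L₁ − #U₀ ≤ Banzhaf(φ, x) ≤ #U₁ − #L₀. -/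
open Finset

variable {V : Type*} [DecidableEq V]

/-- The Boolean function associated with a positive DNF with clause set `C`:
`Y` is a model iff some clause `c ∈ C` satisfies `c ⊆ Y`. -/
def dnfEval (C : Finset (Finset V)) (Y : Finset V) : Bool :=
  decide (∃ c ∈ C, c ⊆ Y)

theorem modelCount_le_aux {X Z : Finset V} {f g : Finset V → Bool} (h : X ⊆ Z)
    (hfg : ∀ Y ⊆ X, f Y = true → g Y = true) : modelCount X f ≤ modelCount Z g := by
  unfold modelCount
  apply Finset.card_le_card
  intro Y hY
  rw [Finset.mem_filter, Finset.mem_powerset] at hY ⊢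
  exact ⟨hY.1.trans h, hfg Y hY.1 hY.2⟩

theorem banzhaf_eq_aux (X : Finset V) (f : Finset V → Bool) (x : V) :
    banzhaf X f x = (modelCount (X \ {x}) (fun Y => f (insert x Y)) : ℤ)
      - (modelCount (X \ {x}) f : ℤ) := by
  unfold banzhaf modelCount
  rw [Finset.sum_sub_distrib]
  simp only [Finset.sum_boole]

/-- Bounds on the Banzhaf value of a variable x in a positive DNF φ over X with
clause set C, obtained from lower-bound iDNFs D₁, D₀ and upper-bound DNFs C₁', C₀'
for the restrictions φ[x:=1] (clause set C.image (·.erase x) over X \ {x}) and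
φ[x:=0] (clause set C.filter (x ∉ ·) over X \ {x}):
#L₁ − #U₀ ≤ Banzhaf(φ, x) ≤ #U₁ − #L₀. -/
theorem banzhaf_bounds (X : Finset V) (C : Finset (Finset V))
    (hC : ∀ c ∈ C, c.Nonempty ∧ c ⊆ X)
    (x : V) (hx : x ∈ X) (hxC : ({x} : Finset V) ∉ C)
    (D₁ : Finset (Finset V))
    (hD₁ : D₁ ⊆ C.image (fun c => c.erase x))
    (hD₁disj : ∀ c ∈ D₁, ∀ d ∈ D₁, c ≠ d → Disjoint c d)
    (D₀ : Finset (Finset V))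
    (hD₀ : D₀ ⊆ C.filter (fun c => x ∉ c))
    (hD₀disj : ∀ c ∈ D₀, ∀ d ∈ D₀, c ≠ d → Disjoint c d)
    (C₁' : Finset (Finset V))
    (hC₁' : ∀ c ∈ C₁', c.Nonempty ∧ c ⊆ X \ {x})
    (hC₁'cover : ∀ c ∈ C.image (fun c => c.erase x), ∃ c' ∈ C₁', c' ⊆ c)
    (C₀' : Finset (Finset V))
    (hC₀' : ∀ c ∈ C₀', c.Nonempty ∧ c ⊆ X \ {x})
    (hC₀'cover : ∀ c ∈ C.filter (fun c => x ∉ c), ∃ c' ∈ C₀', c' ⊆ c) :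
    (modelCount (D₁.sup id) (dnfEval D₁) : ℤ)
        - (modelCount (X \ {x}) (dnfEval C₀') : ℤ)
      ≤ banzhaf X (dnfEval C) x ∧
    banzhaf X (dnfEval C) x
      ≤ (modelCount (X \ {x}) (dnfEval C₁') : ℤ)
        - (modelCount (D₀.sup id) (dnfEval D₀) : ℤ) := by
  rw [banzhaf_eq_aux]
  have s1 : D₁.sup id ⊆ X \ {x} := by
    refine Finset.sup_le fun d hd => ?_
    obtain ⟨c, hc, rfl⟩ := Finset.mem_image.1 (hD₁ hd)
    have := (hC c hc).2
    intro y hy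
    simp only [id, Finset.mem_erase] at hy
    simp [hy.1, this hy.2]
  have s0 : D₀.sup id ⊆ X \ {x} := by
    refine Finset.sup_le fun d hd => ?_
    obtain ⟨hc, hxd⟩ := Finset.mem_filter.1 (hD₀ hd)
    have := (hC d hc).2
    intro y hy
    simp only [id] at hy
    have hne : y ≠ x := fun h => hxd (h ▸ hy)
    simp [hne, this hy]
  have a1 : modelCount (D₁.sup id) (dnfEval D₁)
      ≤ modelCount (X \ {x}) (fun Y => dnfEval C (insert x Y)) := by
    refine modelCount_le_aux s1 fun Y _ h => ?_
    simp only [dnfEval, decide_eq_true_eq] at h ⊢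
    obtain ⟨d, hd, hdY⟩ := h
    obtain ⟨c, hc, rfl⟩ := Finset.mem_image.1 (hD₁ hd)
    exact ⟨c, hc, Finset.subset_insert_iff.2 hdY⟩
  have a2 : modelCount (X \ {x}) (dnfEval C) ≤ modelCount (X \ {x}) (dnfEval C₀') := by
    refine modelCount_le_aux subset_rfl fun Y hY h => ?_
    simp only [dnfEval, decide_eq_true_eq] at h ⊢
    obtain ⟨c, hc, hcY⟩ := h
    have hxc : x ∉ c := fun hxc => by simpa using hY (hcY hxc)
    obtain ⟨c', hc', hs⟩ := hC₀'cover c (Finset.mem_filter.2 ⟨hc, hxc⟩)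
    exact ⟨c', hc', hs.trans hcY⟩
  have a3 : modelCount (X \ {x}) (fun Y => dnfEval C (insert x Y))
      ≤ modelCount (X \ {x}) (dnfEval C₁') := by
    refine modelCount_le_aux subset_rfl fun Y hY h => ?_
    simp only [dnfEval, decide_eq_true_eq] at h ⊢
    obtain ⟨c, hc, hcY⟩ := h
    obtain ⟨c', hc', hs⟩ := hC₁'cover _ (Finset.mem_image_of_mem _ hc)
    exact ⟨c', hc', hs.trans (Finset.subset_insert_iff.1 hcY)⟩
  have a4 : modelCount (D₀.sup id) (dnfEval D₀) ≤ modelCount (X \ {x}) (dnfEval C) := by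
    refine modelCount_le_aux s0 fun Y _ h => ?_
    simp only [dnfEval, decide_eq_true_eq] at h ⊢
    obtain ⟨d, hd, hdY⟩ := h
    exact ⟨d, (Finset.mem_filter.1 (hD₀ hd)).1, hdY⟩
  constructor <;> omega
end

section
/- Let φ be an iDNF over a finite variable set X with |X| = n and pairwise disjoint clauses C₁, …, C_m. Then #φ = 2^n − 2^{n − Σ_{i=1}^m |C_i|} · ∏_{i=1}^m (2^{|C_i|} − 1); equivalently, the number of non-models of φ is 2^{n − Σ_{i=1}^m |C_i|} · ∏_{i=1}^m (2^{|C_i|} − 1). -/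
open Finset

variable {V : Type*} [DecidableEq V]

theorem nonmodel_card_aux (C : Finset (Finset V)) : ∀ (X : Finset V)
    (_ : ∀ c ∈ C, c ⊆ X)
    (_ : ∀ c ∈ C, ∀ d ∈ C, c ≠ d → Disjoint c d),
    (X.powerset.filter fun Y => ∀ c ∈ C, ¬ c ⊆ Y).card =
        2 ^ (X.card - ∑ c ∈ C, c.card) * ∏ c ∈ C, (2 ^ c.card - 1) := by
  induction C using Finset.induction_on with
  | empty => intro X _ _; simp
  | insert c C hc ih =>
    intro X hX hd
    have hcX : c ⊆ X := hX c (mem_insert_self _ _)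
    have hcd : ∀ d ∈ C, Disjoint d c := fun d hdC =>
      hd d (mem_insert_of_mem hdC) c (mem_insert_self _ _) (fun h => hc (h ▸ hdC))
    have ih' := ih (X \ c)
      (fun d hdC => subset_sdiff.2 ⟨hX d (mem_insert_of_mem hdC), hcd d hdC⟩)
      (fun a ha b hb => hd a (mem_insert_of_mem ha) b (mem_insert_of_mem hb))
    rw [card_sdiff_of_subset hcX, Nat.sub_sub] at ih'
    rw [sum_insert hc, prod_insert hc, mul_left_comm, ← ih']
    have h2 : (c.powerset.erase c).card = 2 ^ c.card - 1 := by
      rw [card_erase_of_mem (by simp), card_powerset]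
    rw [← h2, ← card_product]
    have key : ∀ d ∈ C, ∀ Y : Finset V, d ⊆ Y \ c ↔ d ⊆ Y := fun d hdC Y => by
      rw [subset_sdiff]; exact and_iff_left (hcd d hdC)
    refine card_bij' (fun Y _ => (Y ∩ c, Y \ c)) (fun p _ => p.1 ∪ p.2) ?_ ?_ ?_ ?_
    · intro Y hY
      simp only [mem_filter, mem_powerset, mem_insert, forall_eq_or_imp] at hY
      obtain ⟨hYX, hcY, hY⟩ := hY
      simp only [mem_product, mem_erase, mem_powerset, mem_filter]
      refine ⟨⟨fun h => hcY (inter_eq_right.1 h), inter_subset_right⟩,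
        sdiff_subset_sdiff hYX (Subset.refl _), fun d hdC h => hY d hdC ((key d hdC Y).1 h)⟩
    · rintro ⟨A, B⟩ hp
      simp only [mem_product, mem_erase, mem_powerset, mem_filter] at hp
      obtain ⟨⟨hA, hAc⟩, hB, hBC⟩ := hp
      have hBc := (subset_sdiff.1 hB).2
      simp only [mem_filter, mem_powerset, mem_insert, forall_eq_or_imp]
      refine ⟨union_subset (hAc.trans hcX) (hB.trans sdiff_subset), ?_, ?_⟩
      · intro h
        exact hA (Subset.antisymm hAc (hBc.symm.left_le_of_le_sup_right h))
      · intro d hdC h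
        exact hBC d hdC (((hcd d hdC).mono_right hAc).left_le_of_le_sup_left h)
    · intro Y _
      ext x; simp only [mem_union, mem_inter, mem_sdiff]; tauto
    · rintro ⟨A, B⟩ hp
      simp only [mem_product, mem_erase, mem_powerset, mem_filter] at hp
      obtain ⟨⟨hA, hAc⟩, hB, hBC⟩ := hp
      have h3 : ∀ x ∈ A, x ∈ c := fun x hx => hAc hx
      have h4 : ∀ x ∈ B, x ∉ c := fun x hx => (mem_sdiff.1 (hB hx)).2
      ext x
      · simp only [mem_union, mem_inter]; grind
      · simp only [mem_union, mem_sdiff]; grind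

/-- Model count of an iDNF (pairwise-disjoint clauses) over X with |X| = n:
#φ = 2^n − 2^{n − Σ|Cᵢ|} · ∏ (2^{|Cᵢ|} − 1); equivalently, the number of
non-models is 2^{n − Σ|Cᵢ|} · ∏ (2^{|Cᵢ|} − 1). -/
theorem modelCount_iDNF (X : Finset V) (C : Finset (Finset V))
    (hC : ∀ c ∈ C, c.Nonempty ∧ c ⊆ X)
    (hdisj : ∀ c ∈ C, ∀ d ∈ C, c ≠ d → Disjoint c d) :
    modelCount X (dnfEval C) =
        2 ^ X.card - 2 ^ (X.card - ∑ c ∈ C, c.card) * ∏ c ∈ C, (2 ^ c.card - 1) ∧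
    (X.powerset.filter fun Y => ¬ dnfEval C Y).card =
        2 ^ (X.card - ∑ c ∈ C, c.card) * ∏ c ∈ C, (2 ^ c.card - 1) := by
  have h : (X.powerset.filter fun Y => ¬ dnfEval C Y).card =
        2 ^ (X.card - ∑ c ∈ C, c.card) * ∏ c ∈ C, (2 ^ c.card - 1) := by
    rw [← nonmodel_card_aux C X (fun c hc => (hC c hc).2) hdisj]
    congr 1
    ext Y
    simp [dnfEval]
  refine ⟨?_, h⟩
  rw [← h, ← card_powerset, modelCount,
    ← card_filter_add_card_filter_not (s := X.powerset) (fun Y => dnfEval C Y = true)]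
  exact (Nat.add_sub_cancel _ _).symm
end

section
/- With ξ as constructed from a PP2DNF φ over disjoint variable sets X and Y, m ≥ 1, and fresh variables x, y, z₁¹, z₁², …, z_m¹, z_m², the Banzhaf value of x in ξ satisfies Banzhaf(ξ, x) = (#NSat(φ) − 2^{|X|}) · (3^m + 2^m). -/
open Finset

variable {V : Type*} [DecidableEq V]

lemma aux_fresh {m : ℕ} (x y : V) (z₁ z₂ : Fin m → V)
    (h : (insert x (insert y
        (Finset.image z₁ Finset.univ ∪ Finset.image z₂ Finset.univ))).card = 2 * m + 2) :
    x ≠ y ∧ (∀ i, x ≠ z₁ i) ∧ (∀ i, x ≠ z₂ i) ∧ (∀ i, y ≠ z₁ i) ∧ (∀ i, y ≠ z₂ i) ∧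
    (∀ i j, z₁ i ≠ z₂ j) ∧ (∀ i j, z₁ i = z₁ j → i = j) ∧ (∀ i j, z₂ i = z₂ j → i = j) := by
  let e : Option (Option (Fin m ⊕ Fin m)) → V := fun o =>
    o.elim x (fun o => o.elim y (Sum.elim z₁ z₂))
  have hi : insert x (insert y
        (Finset.image z₁ Finset.univ ∪ Finset.image z₂ Finset.univ)) = univ.image e := by
    ext v
    simp [e, Option.exists, eq_comm]
  have hc : (univ.image e).card = (univ : Finset (Option (Option (Fin m ⊕ Fin m)))).card := by
    rw [← hi, h]
    simp; ring
  have hinj : Function.Injective e := by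
    have := Finset.card_image_iff.1 hc
    intro a b hab
    exact this (by simp) (by simp) hab
  refine ⟨fun h => ?_, fun i h => ?_, fun i h => ?_, fun i h => ?_, fun i h => ?_,
    fun i j h => ?_, fun i j h => ?_, fun i j h => ?_⟩
  · simpa using @hinj none (some none) h
  · simpa using @hinj none (some (some (Sum.inl i))) h
  · simpa using @hinj none (some (some (Sum.inr i))) h
  · simpa using @hinj (some none) (some (some (Sum.inl i))) h
  · simpa using @hinj (some none) (some (some (Sum.inr i))) h
  · simpa using @hinj (some (some (Sum.inl i))) (some (some (Sum.inr j))) h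
  · simpa using @hinj (some (some (Sum.inl i))) (some (some (Sum.inl j))) h
  · simpa using @hinj (some (some (Sum.inr i))) (some (some (Sum.inr j))) h

lemma aux_count {m : ℕ} (y : V) (z₁ z₂ : Fin m → V)
    (hy1 : ∀ i, y ≠ z₁ i) (hy2 : ∀ i, y ≠ z₂ i) (h12 : ∀ i j, z₁ i ≠ z₂ j)
    (h1 : ∀ i j, z₁ i = z₁ j → i = j) (h2 : ∀ i j, z₂ i = z₂ j → i = j) :
    (((insert y (Finset.image z₁ Finset.univ ∪ Finset.image z₂ Finset.univ)).powerset.filter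
      fun B => ∀ i, ¬ (z₁ i ∈ B ∧ z₂ i ∈ B) ∧ ¬ (y ∈ B ∧ z₂ i ∈ B)).card) = 3 ^ m + 2 ^ m := by
  let T : Finset (Σ _ : Bool, (Fin m → Bool × Bool)) := (univ : Finset Bool).sigma (fun b =>
    Fintype.piFinset (fun _ : Fin m => (univ : Finset (Bool × Bool)).filter
      (fun p => ¬ (p.1 = true ∧ p.2 = true) ∧ ¬ (b = true ∧ p.2 = true))))
  have hT : T.card = 3 ^ m + 2 ^ m := by
    simp only [T, Finset.card_sigma, Fintype.card_piFinset, Fintype.sum_bool, Finset.prod_const,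
      Finset.card_univ, Fintype.card_fin]
    rw [add_comm]
    congr 1
  rw [← hT]
  refine Finset.card_bij' (fun B _ => ⟨decide (y ∈ B), fun i => (decide (z₁ i ∈ B), decide (z₂ i ∈ B))⟩)
    (fun g _ => (if g.1 = true then {y} else ∅) ∪
      ((univ.filter (fun i => (g.2 i).1 = true)).image z₁ ∪
       (univ.filter (fun i => (g.2 i).2 = true)).image z₂)) ?_ ?_ ?_ ?_
  · intro B hB
    simp only [Finset.mem_filter] at hB
    simpa [T, em] using hB.2
  · rintro ⟨b, f⟩ hg
    simp only [T, Finset.mem_sigma, Fintype.mem_piFinset, Finset.mem_filter] at hg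
    have hz1 : ∀ i, z₁ i ∈ ((if b = true then {y} else ∅) ∪
      ((univ.filter (fun i => (f i).1 = true)).image z₁ ∪
       (univ.filter (fun i => (f i).2 = true)).image z₂) : Finset V) ↔ (f i).1 = true := by
      cases b <;> grind
    have hz2 : ∀ i, z₂ i ∈ ((if b = true then {y} else ∅) ∪
      ((univ.filter (fun i => (f i).1 = true)).image z₁ ∪
       (univ.filter (fun i => (f i).2 = true)).image z₂) : Finset V) ↔ (f i).2 = true := by
      cases b <;> grind
    have hz0 : y ∈ ((if b = true then {y} else ∅) ∪
      ((univ.filter (fun i => (f i).1 = true)).image z₁ ∪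
       (univ.filter (fun i => (f i).2 = true)).image z₂) : Finset V) ↔ b = true := by
      cases b <;> grind
    simp only [Finset.mem_filter, Finset.mem_powerset]
    refine ⟨?_, fun i => ?_⟩
    · intro v hv
      cases b <;> grind
    · rw [hz1, hz2, hz0]; exact (hg.2 i).2
  · intro B hB
    simp only [Finset.mem_filter, Finset.mem_powerset] at hB
    have hB1 := hB.1
    ext v
    simp only [decide_eq_true_eq, Finset.mem_union, Finset.mem_image, Finset.mem_filter]
    constructor
    · split_ifs <;> grind
    · intro hv
      have := hB1 hv
      split_ifs <;> grind
  · rintro ⟨b, f⟩ hg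
    refine Sigma.ext ?_ (heq_of_eq (funext fun i => Prod.ext ?_ ?_))
    · cases b <;> simp <;> grind
    · cases b <;> simp <;> grind
    · cases b <;> simp <;> grind

lemma aux_split (W F : Finset V) (h : Disjoint W F) (P Q : Finset V → Prop)
    [DecidablePred P] [DecidablePred Q] :
    ((W ∪ F).powerset.filter (fun S => P (S ∩ W) ∧ Q (S ∩ F))).card
      = (W.powerset.filter P).card * (F.powerset.filter Q).card := by
  rw [← Finset.card_product]
  rw [Finset.disjoint_left] at h
  refine Finset.card_bij' (fun S _ => (S ∩ W, S ∩ F)) (fun p _ => p.1 ∪ p.2) ?_ ?_ ?_ ?_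
  · intro S hS
    simp only [Finset.mem_filter, Finset.mem_product, Finset.mem_powerset] at hS ⊢
    exact ⟨⟨Finset.inter_subset_right, hS.2.1⟩, ⟨Finset.inter_subset_right, hS.2.2⟩⟩
  · rintro ⟨A, B⟩ hS
    simp only [Finset.mem_filter, Finset.mem_product, Finset.mem_powerset] at hS ⊢
    have e1 : (A ∪ B) ∩ W = A := by ext v; have := @hS.1.1 v; have := @hS.2.1 v; grind
    have e2 : (A ∪ B) ∩ F = B := by ext v; have := @hS.1.1 v; have := @hS.2.1 v; grind
    rw [e1, e2]
    exact ⟨Finset.union_subset_union hS.1.1 hS.2.1, hS.1.2, hS.2.2⟩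
  · intro S hS
    simp only [Finset.mem_filter, Finset.mem_powerset] at hS
    ext v; have := @hS.1 v; grind
  · rintro ⟨A, B⟩ hS
    simp only [Finset.mem_filter, Finset.mem_product, Finset.mem_powerset] at hS
    refine Prod.ext ?_ ?_
    · ext v; have := @hS.1.1 v; have := @hS.2.1 v; grind
    · ext v; have := @hS.1.1 v; have := @hS.2.1 v; grind

lemma aux_phi (X Y : Finset V) (hXY : Disjoint X Y)
    (E : Finset (V × V)) (hE : E ⊆ X ×ˢ Y) :
    ((((X ∪ Y).powerset.filter fun S => (¬ ∃ p ∈ E, p.1 ∈ S ∧ p.2 ∈ S) ∧ ∃ v ∈ Y, v ∈ S).card : ℕ) : ℤ)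
      = (((X ∪ Y).powerset.filter fun S =>
          ¬ dnfEval (E.image fun p => ({p.1, p.2} : Finset V)) S).card : ℤ) - 2 ^ X.card := by
  have h0 : ((X ∪ Y).powerset.filter fun S =>
          ¬ dnfEval (E.image fun p => ({p.1, p.2} : Finset V)) S)
      = ((X ∪ Y).powerset.filter fun S => ¬ ∃ p ∈ E, p.1 ∈ S ∧ p.2 ∈ S) := by
    apply Finset.filter_congr
    intro S _
    simp [dnfEval, Finset.insert_subset_iff]
  rw [h0, ← Finset.card_filter_add_card_filter_not (s := (X ∪ Y).powerset.filter fun S =>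
    ¬ ∃ p ∈ E, p.1 ∈ S ∧ p.2 ∈ S) (fun S => ∃ v ∈ Y, v ∈ S), Finset.filter_filter]
  have h1 : (((X ∪ Y).powerset.filter fun S => ¬ ∃ p ∈ E, p.1 ∈ S ∧ p.2 ∈ S).filter
      fun S => ¬ ∃ v ∈ Y, v ∈ S) = X.powerset := by
    ext S
    simp only [Finset.mem_filter, Finset.mem_powerset]
    rw [Finset.disjoint_left] at hXY
    constructor
    · rintro ⟨⟨h, _⟩, h'⟩ v hv
      have := h hv
      grind
    · intro h
      refine ⟨⟨fun v hv => Finset.mem_union_left _ (h hv), ?_⟩, ?_⟩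
      · rintro ⟨p, hp, h1, h2⟩
        exact hXY (h h2) (Finset.mem_product.1 (hE hp)).2
      · rintro ⟨v, hv, h1⟩
        exact hXY (h h1) hv
  rw [h1, Finset.card_powerset]
  push_cast
  ring

/-- For the function ξ built from a PP2DNF φ (edge set E ⊆ X × Y) together with
fresh variables x, y, z₁¹, z₁², …, z_m¹, z_m² and the extra clauses
{x, v} (v ∈ Y), {zᵢ¹, zᵢ²}, and {y, zᵢ²}:
Banzhaf(ξ, x) = (#NSat(φ) − 2^{|X|}) · (3^m + 2^m). -/
theorem banzhaf_xi_x (X Y : Finset V) (hXY : Disjoint X Y)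
    (E : Finset (V × V)) (hE : E ⊆ X ×ˢ Y)
    (m : ℕ) (hm : 1 ≤ m) (x y : V) (z₁ z₂ : Fin m → V)
    (hfresh_card :
      (insert x (insert y
        (Finset.image z₁ Finset.univ ∪ Finset.image z₂ Finset.univ))).card
        = 2 * m + 2)
    (hfresh_disj :
      Disjoint
        (insert x (insert y
          (Finset.image z₁ Finset.univ ∪ Finset.image z₂ Finset.univ)))
        (X ∪ Y)) :
    banzhaf
        (X ∪ Y ∪ insert x (insert y
          (Finset.image z₁ Finset.univ ∪ Finset.image z₂ Finset.univ)))
        (dnfEval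
          ((E.image fun p => ({p.1, p.2} : Finset V))
            ∪ Y.image (fun v => ({x, v} : Finset V))
            ∪ Finset.image (fun i : Fin m => ({z₁ i, z₂ i} : Finset V)) Finset.univ
            ∪ Finset.image (fun i : Fin m => ({y, z₂ i} : Finset V)) Finset.univ))
        x =
      ((((X ∪ Y).powerset.filter fun S =>
          ¬ dnfEval (E.image fun p => ({p.1, p.2} : Finset V)) S).card : ℤ)
          - 2 ^ X.card) * (3 ^ m + 2 ^ m) := by
  obtain ⟨hxy, hx1, hx2, hy1, hy2, h12, h1, h2⟩ := aux_fresh x y z₁ z₂ hfresh_card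
  rw [← aux_phi X Y hXY E hE]
  have hc := aux_count y z₁ z₂ hy1 hy2 h12 h1 h2
  have hc' : (3 ^ m + 2 ^ m : ℤ) = ((3 ^ m + 2 ^ m : ℕ) : ℤ) := by push_cast; rfl
  rw [hc', ← hc, ← Nat.cast_mul]
  set F : Finset V := insert y (Finset.image z₁ Finset.univ ∪ Finset.image z₂ Finset.univ) with hF
  rw [Finset.disjoint_left] at hfresh_disj
  have hxF : x ∉ F := by
    simp only [hF, Finset.mem_insert, Finset.mem_union, Finset.mem_image]
    grind
  have hxW : x ∉ X ∪ Y := hfresh_disj (Finset.mem_insert_self _ _)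
  have hWF : Disjoint (X ∪ Y) F := by
    rw [Finset.disjoint_left]
    intro v hv hv'
    exact hfresh_disj (Finset.mem_insert_of_mem hv') hv
  have hyF : y ∈ F := by simp [hF]
  have hz1F : ∀ i, z₁ i ∈ F := by simp [hF]
  have hz2F : ∀ i, z₂ i ∈ F := by simp [hF]
  rw [← aux_split (X ∪ Y) F hWF]
  have hU : (X ∪ Y ∪ insert x F) \ {x} = (X ∪ Y) ∪ F := by
    ext v; simp only [Finset.mem_sdiff, Finset.mem_union, Finset.mem_insert, Finset.mem_singleton]
    simp only [Finset.mem_union] at hxW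
    grind
  unfold banzhaf
  rw [hU, Finset.card_filter, Nat.cast_sum]
  apply Finset.sum_congr rfl
  intro S hS
  rw [Finset.mem_powerset] at hS
  have hxS : x ∉ S := fun h => by
    rcases Finset.mem_union.1 (hS h) with h | h
    · exact hxW h
    · exact hxF h
  have hev : ∀ R : Finset V, dnfEval
          ((E.image fun p => ({p.1, p.2} : Finset V))
            ∪ Y.image (fun v => ({x, v} : Finset V))
            ∪ Finset.image (fun i : Fin m => ({z₁ i, z₂ i} : Finset V)) Finset.univ
            ∪ Finset.image (fun i : Fin m => ({y, z₂ i} : Finset V)) Finset.univ) R = true ↔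
      ((∃ p ∈ E, p.1 ∈ R ∧ p.2 ∈ R) ∨ (∃ v ∈ Y, x ∈ R ∧ v ∈ R)) ∨
        (∃ i, (z₁ i ∈ R ∧ z₂ i ∈ R) ∨ (y ∈ R ∧ z₂ i ∈ R)) := by
    intro R
    simp only [dnfEval, decide_eq_true_eq, Finset.mem_union, Finset.mem_image, or_and_right,
      exists_or, Finset.mem_univ, true_and, exists_exists_and_eq_and, exists_exists_eq_and,
      Finset.insert_subset_iff, Finset.singleton_subset_iff, or_assoc]
  have hEx : ∀ p ∈ E, p.1 ∈ X ∪ Y ∧ p.2 ∈ X ∪ Y ∧ p.1 ≠ x ∧ p.2 ≠ x := by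
    intro p hp
    have := Finset.mem_product.1 (hE hp)
    have a := Finset.mem_union_left Y this.1
    have b := Finset.mem_union_right X this.2
    exact ⟨a, b, fun h => hxW (h ▸ a), fun h => hxW (h ▸ b)⟩
  have hYx : ∀ v ∈ Y, v ∈ X ∪ Y ∧ v ≠ x := fun v hv =>
    ⟨Finset.mem_union_right X hv, fun h => hxW (h ▸ Finset.mem_union_right X hv)⟩
  have hA : (∃ p ∈ E, p.1 ∈ insert x S ∧ p.2 ∈ insert x S) ↔ ∃ p ∈ E, p.1 ∈ S ∧ p.2 ∈ S := by
    simp only [Finset.mem_insert]; grind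
  have hA' : (∃ p ∈ E, p.1 ∈ S ∩ (X ∪ Y) ∧ p.2 ∈ S ∩ (X ∪ Y)) ↔ ∃ p ∈ E, p.1 ∈ S ∧ p.2 ∈ S := by
    simp only [Finset.mem_inter]; grind
  have hB : (∃ v ∈ Y, x ∈ insert x S ∧ v ∈ insert x S) ↔ ∃ v ∈ Y, v ∈ S := by
    simp only [Finset.mem_insert]; grind
  have hB' : (∃ v ∈ Y, v ∈ S ∩ (X ∪ Y)) ↔ ∃ v ∈ Y, v ∈ S := by
    simp only [Finset.mem_inter]; grind
  have hBn : (∃ v ∈ Y, x ∈ S ∧ v ∈ S) ↔ False := by simp [hxS]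
  have hC : (∃ i, (z₁ i ∈ insert x S ∧ z₂ i ∈ insert x S) ∨ (y ∈ insert x S ∧ z₂ i ∈ insert x S)) ↔
      ∃ i, (z₁ i ∈ S ∧ z₂ i ∈ S) ∨ (y ∈ S ∧ z₂ i ∈ S) := by
    simp only [Finset.mem_insert]; grind
  have hC' : (∀ i, ¬ (z₁ i ∈ S ∩ F ∧ z₂ i ∈ S ∩ F) ∧ ¬ (y ∈ S ∩ F ∧ z₂ i ∈ S ∩ F)) ↔
      ¬ ∃ i, (z₁ i ∈ S ∧ z₂ i ∈ S) ∨ (y ∈ S ∧ z₂ i ∈ S) := by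
    simp only [Finset.mem_inter, hyF, hz1F, hz2F, and_true]
    push Not
    rfl
  simp only [hev, hA, hA', hB, hB', hBn, hC, hC']
  by_cases a : ∃ p ∈ E, p.1 ∈ S ∧ p.2 ∈ S <;> by_cases b : ∃ v ∈ Y, v ∈ S <;>
    by_cases c : ∃ i, (z₁ i ∈ S ∧ z₂ i ∈ S) ∨ (y ∈ S ∧ z₂ i ∈ S) <;>
    simp only [a, b, c] <;> simp
end

section
/- With ξ as constructed from a PP2DNF φ over disjoint variable sets X and Y, m ≥ 1, and fresh variables x, y, z₁¹, z₁², …, z_m¹, z_m², the Banzhaf value of y in ξ satisfies Banzhaf(ξ, y) = (3^m − 2^m) · (#NSat(φ) + 2^{|X|}). -/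
open Finset

variable {V : Type*} [DecidableEq V]

lemma sum_powerset_union_aux (A B : Finset V) (h : Disjoint A B) (f : Finset V → ℤ) :
    ∑ S ∈ (A ∪ B).powerset, f S = ∑ S ∈ A.powerset, ∑ T ∈ B.powerset, f (S ∪ T) := by
  induction B using Finset.induction_on generalizing f with
  | empty => simp
  | insert b B hb ih =>
    rw [Finset.disjoint_insert_right] at h
    have hb2 : b ∉ A ∪ B := by simp [h.1, hb]
    rw [Finset.union_insert, Finset.sum_powerset_insert hb2, ih h.2, ih h.2 (fun S => f (insert b S)),
      ← Finset.sum_add_distrib]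
    refine Finset.sum_congr rfl fun S _ => ?_
    rw [Finset.sum_powerset_insert hb]
    simp only [Finset.union_insert]

lemma count_pairs_aux {ι : Type*} [DecidableEq ι] (z₁ z₂ : ι → V) (h1 : Function.Injective z₁)
    (h2 : Function.Injective z₂) (h12 : ∀ i j, z₁ i ≠ z₂ j) (I : Finset ι) :
    (∑ T ∈ (I.image z₁ ∪ I.image z₂).powerset,
      (if ∀ i ∈ I, ¬ (z₁ i ∈ T ∧ z₂ i ∈ T) then 1 else 0 : ℤ)) = 3 ^ I.card ∧
    (∑ T ∈ (I.image z₁ ∪ I.image z₂).powerset,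
      (if ∀ i ∈ I, z₂ i ∉ T then 1 else 0 : ℤ)) = 2 ^ I.card := by
  induction I using Finset.induction_on with
  | empty => simp
  | insert a I ha ih =>
    have e : (insert a I).image z₁ ∪ (insert a I).image z₂
        = insert (z₁ a) (insert (z₂ a) (I.image z₁ ∪ I.image z₂)) := by
      ext v; simp only [Finset.mem_union, Finset.mem_image, Finset.mem_insert]; grind
    have hb : z₂ a ∉ I.image z₁ ∪ I.image z₂ := by
      simp only [Finset.mem_union, Finset.mem_image]; grind [Function.Injective]
    have hc : z₁ a ∉ insert (z₂ a) (I.image z₁ ∪ I.image z₂) := by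
      simp only [Finset.mem_union, Finset.mem_image, Finset.mem_insert]; grind [Function.Injective]
    have hc' : z₁ a ∉ I.image z₁ ∪ I.image z₂ := fun h => hc (Finset.mem_insert_of_mem h)
    have n1 : ∀ i ∈ I, z₁ i ≠ z₁ a := fun i hi h => ha (h1 h ▸ hi)
    have n2 : ∀ i ∈ I, z₂ i ≠ z₂ a := fun i hi h => ha (h2 h ▸ hi)
    rw [e, Finset.card_insert_of_notMem ha, pow_succ, pow_succ, ← ih.1, ← ih.2]
    constructor
    · rw [Finset.sum_powerset_insert hc, Finset.sum_powerset_insert hb,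
        Finset.sum_powerset_insert hb, ← Finset.sum_add_distrib, ← Finset.sum_add_distrib,
        ← Finset.sum_add_distrib, Finset.sum_mul]
      refine Finset.sum_congr rfl fun T hT => ?_
      rw [Finset.mem_powerset] at hT
      have t1 : z₁ a ∉ T := fun h => hc' (hT h)
      have t2 : z₂ a ∉ T := fun h => hb (hT h)
      have q1 : (∀ i ∈ insert a I, ¬ (z₁ i ∈ T ∧ z₂ i ∈ T)) ↔ ∀ i ∈ I, ¬ (z₁ i ∈ T ∧ z₂ i ∈ T) := by
        grind
      have q2 : (∀ i ∈ insert a I, ¬ (z₁ i ∈ insert (z₂ a) T ∧ z₂ i ∈ insert (z₂ a) T)) ↔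
          ∀ i ∈ I, ¬ (z₁ i ∈ T ∧ z₂ i ∈ T) := by
        grind
      have q3 : (∀ i ∈ insert a I, ¬ (z₁ i ∈ insert (z₁ a) T ∧ z₂ i ∈ insert (z₁ a) T)) ↔
          ∀ i ∈ I, ¬ (z₁ i ∈ T ∧ z₂ i ∈ T) := by
        grind
      have q4 : ¬ (∀ i ∈ insert a I, ¬ (z₁ i ∈ insert (z₁ a) (insert (z₂ a) T) ∧
          z₂ i ∈ insert (z₁ a) (insert (z₂ a) T))) := by
        grind
      rw [if_congr q1 rfl rfl, if_congr q2 rfl rfl, if_congr q3 rfl rfl, if_neg q4]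
      ring
    · rw [Finset.sum_powerset_insert hc, Finset.sum_powerset_insert hb,
        Finset.sum_powerset_insert hb, ← Finset.sum_add_distrib, ← Finset.sum_add_distrib,
        ← Finset.sum_add_distrib, Finset.sum_mul]
      refine Finset.sum_congr rfl fun T hT => ?_
      rw [Finset.mem_powerset] at hT
      have t1 : z₁ a ∉ T := fun h => hc' (hT h)
      have t2 : z₂ a ∉ T := fun h => hb (hT h)
      have q1 : (∀ i ∈ insert a I, z₂ i ∉ T) ↔ ∀ i ∈ I, z₂ i ∉ T := by
        grind
      have q2 : ¬ (∀ i ∈ insert a I, z₂ i ∉ insert (z₂ a) T) := by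
        grind
      have q3 : (∀ i ∈ insert a I, z₂ i ∉ insert (z₁ a) T) ↔ ∀ i ∈ I, z₂ i ∉ T := by
        grind
      have q4 : ¬ (∀ i ∈ insert a I, z₂ i ∉ insert (z₁ a) (insert (z₂ a) T)) := by
        grind
      rw [if_congr q1 rfl rfl, if_neg q2, if_congr q3 rfl rfl, if_neg q4]
      ring

/-- For the function ξ built from a PP2DNF φ (edge set E ⊆ X × Y) together with
fresh variables x, y, z₁¹, z₁², …, z_m¹, z_m² and the extra clauses
{x, v} (v ∈ Y), {zᵢ¹, zᵢ²}, and {y, zᵢ²}: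
Banzhaf(ξ, y) = (3^m − 2^m) · (#NSat(φ) + 2^{|X|}). -/
theorem banzhaf_xi_y (X Y : Finset V) (hXY : Disjoint X Y)
    (E : Finset (V × V)) (hE : E ⊆ X ×ˢ Y)
    (m : ℕ) (hm : 1 ≤ m) (x y : V) (z₁ z₂ : Fin m → V)
    (hfresh_card :
      (insert x (insert y
        (Finset.image z₁ Finset.univ ∪ Finset.image z₂ Finset.univ))).card
        = 2 * m + 2)
    (hfresh_disj :
      Disjoint
        (insert x (insert y
          (Finset.image z₁ Finset.univ ∪ Finset.image z₂ Finset.univ)))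
        (X ∪ Y)) :
    banzhaf
        (X ∪ Y ∪ insert x (insert y
          (Finset.image z₁ Finset.univ ∪ Finset.image z₂ Finset.univ)))
        (dnfEval
          ((E.image fun p => ({p.1, p.2} : Finset V))
            ∪ Y.image (fun v => ({x, v} : Finset V))
            ∪ Finset.image (fun i : Fin m => ({z₁ i, z₂ i} : Finset V)) Finset.univ
            ∪ Finset.image (fun i : Fin m => ({y, z₂ i} : Finset V)) Finset.univ))
        y =
      ((3 : ℤ) ^ m - 2 ^ m) *
        ((((X ∪ Y).powerset.filter fun S =>
            ¬ dnfEval (E.image fun p => ({p.1, p.2} : Finset V)) S).card : ℤ)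
          + 2 ^ X.card) := by
  have c1 : (Finset.image z₁ Finset.univ).card ≤ m := by
    simpa using Finset.card_image_le (s := (Finset.univ : Finset (Fin m))) (f := z₁)
  have c2 : (Finset.image z₂ Finset.univ).card ≤ m := by
    simpa using Finset.card_image_le (s := (Finset.univ : Finset (Fin m))) (f := z₂)
  set Z₁ := Finset.image z₁ Finset.univ with hZ₁
  set Z₂ := Finset.image z₂ Finset.univ with hZ₂
  have c3 := Finset.card_union_add_card_inter Z₁ Z₂
  have c4 := Finset.card_insert_le y (Z₁ ∪ Z₂)
  have c5 := Finset.card_insert_le x (insert y (Z₁ ∪ Z₂))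
  have hx : x ∉ insert y (Z₁ ∪ Z₂) := by
    intro h
    rw [Finset.insert_eq_of_mem h] at hfresh_card
    omega
  have hy : y ∉ Z₁ ∪ Z₂ := by
    intro h
    rw [Finset.insert_eq_of_mem h] at hfresh_card c5
    omega
  have hinter : Z₁ ∩ Z₂ = ∅ := Finset.card_eq_zero.mp (by omega)
  have h1 : Function.Injective z₁ := by
    have : Z₁.card = (Finset.univ : Finset (Fin m)).card := by
      rw [Finset.card_univ, Fintype.card_fin]; omega
    have := Finset.card_image_iff.mp this
    exact fun a b h => this (by simp) (by simp) h
  have h2 : Function.Injective z₂ := by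
    have : Z₂.card = (Finset.univ : Finset (Fin m)).card := by
      rw [Finset.card_univ, Fintype.card_fin]; omega
    have := Finset.card_image_iff.mp this
    exact fun a b h => this (by simp) (by simp) h
  have m1 : ∀ i, z₁ i ∈ Z₁ := fun i => Finset.mem_image_of_mem _ (Finset.mem_univ i)
  have m2 : ∀ i, z₂ i ∈ Z₂ := fun i => Finset.mem_image_of_mem _ (Finset.mem_univ i)
  have h12 : ∀ i j, z₁ i ≠ z₂ j := by
    intro i j h
    have : z₁ i ∈ Z₁ ∩ Z₂ := Finset.mem_inter.mpr ⟨m1 i, h ▸ m2 j⟩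
    simp [hinter] at this
  have hcount := count_pairs_aux z₁ z₂ h1 h2 h12 Finset.univ
  rw [← hZ₁, ← hZ₂, Finset.card_univ, Fintype.card_fin] at hcount
  have hd : ∀ v ∈ X ∪ Y, v ∉ insert x (insert y (Z₁ ∪ Z₂)) :=
    fun v hv hv' => Finset.disjoint_left.mp hfresh_disj hv' hv
  have hxA : x ∉ X ∪ Y := fun h => hd x h (by simp)
  have hyA : y ∉ X ∪ Y := fun h => hd y h (by simp)
  have hZA : ∀ v ∈ Z₁ ∪ Z₂, v ∉ X ∪ Y := fun v hv h => hd v h (by simp [Finset.mem_union.mp hv])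
  have hxy : x ≠ y := fun h => hx (by simp [h])
  have hxZ : x ∉ Z₁ ∪ Z₂ := fun h => hx (Finset.mem_insert_of_mem h)
  have hset : (X ∪ Y ∪ insert x (insert y (Z₁ ∪ Z₂))) \ {y} = insert x (X ∪ Y) ∪ (Z₁ ∪ Z₂) := by
    ext v
    simp only [Finset.mem_sdiff, Finset.mem_union, Finset.mem_insert, Finset.mem_singleton] at *
    grind
  have hdisj : Disjoint (insert x (X ∪ Y)) (Z₁ ∪ Z₂) := by
    rw [Finset.disjoint_left]
    intro v hv hv'
    rcases Finset.mem_insert.mp hv with rfl | hv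
    · exact hxZ hv'
    · exact hZA v hv' hv
  unfold banzhaf
  rw [hset, sum_powerset_union_aux _ _ hdisj]
  -- the condition that the part over `X ∪ Y ∪ {x}` is falsified
  let P : Finset V → Prop := fun S => (∀ p ∈ E, ¬ (p.1 ∈ S ∧ p.2 ∈ S)) ∧ ∀ v ∈ Y, ¬ (x ∈ S ∧ v ∈ S)
  have key : ∀ S ∈ (insert x (X ∪ Y)).powerset, ∀ T ∈ (Z₁ ∪ Z₂).powerset,
      ((if dnfEval ((E.image fun p => ({p.1, p.2} : Finset V))
            ∪ Y.image (fun v => ({x, v} : Finset V))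
            ∪ Finset.image (fun i : Fin m => ({z₁ i, z₂ i} : Finset V)) Finset.univ
            ∪ Finset.image (fun i : Fin m => ({y, z₂ i} : Finset V)) Finset.univ)
            (insert y (S ∪ T)) then 1 else 0)
        - (if dnfEval ((E.image fun p => ({p.1, p.2} : Finset V))
            ∪ Y.image (fun v => ({x, v} : Finset V))
            ∪ Finset.image (fun i : Fin m => ({z₁ i, z₂ i} : Finset V)) Finset.univ
            ∪ Finset.image (fun i : Fin m => ({y, z₂ i} : Finset V)) Finset.univ)
            (S ∪ T) then 1 else 0) : ℤ)
      = (if P S then 1 else 0) *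
        ((if ∀ i ∈ (Finset.univ : Finset (Fin m)), ¬ (z₁ i ∈ T ∧ z₂ i ∈ T) then 1 else 0)
          - (if ∀ i ∈ (Finset.univ : Finset (Fin m)), z₂ i ∉ T then 1 else 0)) := by
    intro S hS T hT
    rw [Finset.mem_powerset] at hS hT
    have yS : y ∉ S := fun h => by
      rcases Finset.mem_insert.mp (hS h) with h | h
      · exact hxy h.symm
      · exact hyA h
    have yT : y ∉ T := fun h => hy (hT h)
    have xT : x ∉ T := fun h => hxZ (hT h)
    have AT : ∀ v ∈ X ∪ Y, v ∉ T := fun v hv h => hZA v (hT h) hv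
    have ZS : ∀ v ∈ Z₁ ∪ Z₂, v ∉ S := fun v hv h => Finset.disjoint_left.mp hdisj (hS h) hv
    have z1S : ∀ i, z₁ i ∉ S := fun i => ZS _ (Finset.mem_union_left _ (m1 i))
    have z2S : ∀ i, z₂ i ∉ S := fun i => ZS _ (Finset.mem_union_right _ (m2 i))
    have z1y : ∀ i, z₁ i ≠ y := fun i h => hy (h ▸ Finset.mem_union_left _ (m1 i))
    have z2y : ∀ i, z₂ i ≠ y := fun i h => hy (h ▸ Finset.mem_union_right _ (m2 i))
    have E1 : ∀ p ∈ E, p.1 ∉ T ∧ p.2 ∉ T ∧ p.1 ≠ y ∧ p.2 ≠ y := by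
      intro p hp
      have := Finset.mem_product.mp (hE hp)
      have a1 : p.1 ∈ X ∪ Y := Finset.mem_union_left _ this.1
      have a2 : p.2 ∈ X ∪ Y := Finset.mem_union_right _ this.2
      exact ⟨AT _ a1, AT _ a2, fun h => hyA (h ▸ a1), fun h => hyA (h ▸ a2)⟩
    have Y1 : ∀ v ∈ Y, v ∉ T ∧ v ≠ y := by
      intro v hv
      have a2 : v ∈ X ∪ Y := Finset.mem_union_right _ hv
      exact ⟨AT _ a2, fun h => hyA (h ▸ a2)⟩
    have gen : ∀ W : Finset V, dnfEval ((E.image fun p => ({p.1, p.2} : Finset V))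
            ∪ Y.image (fun v => ({x, v} : Finset V))
            ∪ Finset.image (fun i : Fin m => ({z₁ i, z₂ i} : Finset V)) Finset.univ
            ∪ Finset.image (fun i : Fin m => ({y, z₂ i} : Finset V)) Finset.univ) W = true ↔
        ¬ ((∀ p ∈ E, ¬ (p.1 ∈ W ∧ p.2 ∈ W)) ∧ (∀ v ∈ Y, ¬ (x ∈ W ∧ v ∈ W)) ∧
          (∀ i, ¬ (z₁ i ∈ W ∧ z₂ i ∈ W)) ∧ (∀ i, ¬ (y ∈ W ∧ z₂ i ∈ W))) := by
      intro W
      rw [dnfEval, decide_eq_true_iff, ← not_iff_not, not_not]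
      simp only [Finset.mem_union, or_imp, forall_and, not_exists, not_and, Finset.mem_image,
        Finset.mem_univ, true_and, forall_exists_index, and_imp, forall_apply_eq_imp_iff₂,
        forall_apply_eq_imp_iff, Finset.insert_subset_iff, Finset.singleton_subset_iff, and_assoc]
    have g1 := gen (insert y (S ∪ T))
    have g2 := gen (S ∪ T)
    have e1 : (((∀ p ∈ E, ¬ (p.1 ∈ insert y (S ∪ T) ∧ p.2 ∈ insert y (S ∪ T))) ∧
        (∀ v ∈ Y, ¬ (x ∈ insert y (S ∪ T) ∧ v ∈ insert y (S ∪ T))) ∧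
          (∀ i, ¬ (z₁ i ∈ insert y (S ∪ T) ∧ z₂ i ∈ insert y (S ∪ T))) ∧
          (∀ i, ¬ (y ∈ insert y (S ∪ T) ∧ z₂ i ∈ insert y (S ∪ T))))) ↔
        P S ∧ ∀ i, z₂ i ∉ T := by
      simp only [P, Finset.mem_insert, Finset.mem_union]
      grind
    have e2 : (((∀ p ∈ E, ¬ (p.1 ∈ (S ∪ T) ∧ p.2 ∈ (S ∪ T))) ∧
        (∀ v ∈ Y, ¬ (x ∈ (S ∪ T) ∧ v ∈ (S ∪ T))) ∧
          (∀ i, ¬ (z₁ i ∈ (S ∪ T) ∧ z₂ i ∈ (S ∪ T))) ∧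
          (∀ i, ¬ (y ∈ (S ∪ T) ∧ z₂ i ∈ (S ∪ T))))) ↔
        P S ∧ ∀ i, ¬ (z₁ i ∈ T ∧ z₂ i ∈ T) := by
      simp only [P, Finset.mem_union]
      clear g1 g2 gen e1 hcount hset hdisj hfresh_disj hfresh_card hd AT ZS hZA hS hT hE c3 c4 c5 c1 c2
      clear h1 h2 hinter m1 m2 hx hy hxA hyA hxZ hXY
      clear_value Z₁ Z₂
      constructor
      · rintro ⟨a, b, c, -⟩
        exact ⟨⟨by grind, by grind⟩, by grind⟩
      · rintro ⟨⟨a, b⟩, c⟩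
        exact ⟨by grind, by grind, by grind, by grind⟩
    rw [e1] at g1
    rw [e2] at g2
    rw [if_congr g1 rfl rfl, if_congr g2 rfl rfl]
    simp only [Finset.mem_univ, true_imp_iff]
    by_cases p : P S <;> by_cases q : ∀ i, z₂ i ∉ T <;>
      by_cases r : ∀ i, ¬ (z₁ i ∈ T ∧ z₂ i ∈ T) <;> simp only [p, q, r] <;> simp
  rw [Finset.sum_congr rfl fun S hS => Finset.sum_congr rfl fun T hT => key S hS T hT]
  simp_rw [← Finset.mul_sum]
  have k1 : (∑ T ∈ (Z₁ ∪ Z₂).powerset,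
      (if ∀ i ∈ (Finset.univ : Finset (Fin m)), ¬ (z₁ i ∈ T ∧ z₂ i ∈ T) then 1 else 0 : ℤ)) = 3 ^ m := by
    convert hcount.1
  have k2 : (∑ T ∈ (Z₁ ∪ Z₂).powerset,
      (if ∀ i ∈ (Finset.univ : Finset (Fin m)), z₂ i ∉ T then 1 else 0 : ℤ)) = 2 ^ m := by
    convert hcount.2
  rw [← Finset.sum_mul, Finset.sum_sub_distrib, k1, k2, mul_comm]
  congr 1
  rw [Finset.sum_powerset_insert hxA]
  congr 1
  · rw [Finset.card_filter, Nat.cast_sum]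
    refine Finset.sum_congr rfl fun S hS => ?_
    have xS : x ∉ S := fun h => hxA (Finset.mem_powerset.mp hS h)
    have : P S ↔ ¬ dnfEval (E.image fun p => ({p.1, p.2} : Finset V)) S = true := by
      rw [dnfEval, decide_eq_true_iff]
      simp only [P, not_exists, not_and, Finset.mem_image, forall_exists_index, and_imp,
        forall_apply_eq_imp_iff₂, Finset.insert_subset_iff, Finset.singleton_subset_iff]
      grind
    rw [if_congr this rfl rfl]
    push_cast
    rfl
  · rw [sum_powerset_union_aux _ _ hXY]
    have : ∀ S ∈ X.powerset, ∑ T ∈ Y.powerset, (if P (insert x (S ∪ T)) then 1 else 0 : ℤ) = 1 := by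
      intro S hS
      rw [Finset.mem_powerset] at hS
      rw [Finset.sum_eq_single ∅]
      · rw [if_pos]
        have SY : ∀ v ∈ Y, v ∉ insert x (S ∪ ∅) := by
          intro v hv h
          have hvA : v ∈ X ∪ Y := Finset.mem_union_right _ hv
          rw [Finset.union_empty] at h
          rcases Finset.mem_insert.mp h with rfl | h
          · exact hxA hvA
          · exact Finset.disjoint_left.mp hXY (hS h) hv
        exact ⟨fun p hp h => SY _ (Finset.mem_product.mp (hE hp)).2 h.2, fun v hv h => SY v hv h.2⟩
      · intro T hT hne
        rw [if_neg]
        intro hP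
        obtain ⟨v, hv⟩ := Finset.nonempty_iff_ne_empty.mpr hne
        exact hP.2 v (Finset.mem_powerset.mp hT hv) ⟨by simp, by simp [hv]⟩
      · simp
    rw [Finset.sum_congr rfl this]
    simp
end

section
/- There exist a finite variable set X, a monotone Boolean function φ over X, and variables x, y ∈ X such that Banzhaf(φ, x) > Banzhaf(φ, y) while Shapley(φ, x) < Shapley(φ, y); that is, ranking variables by Banzhaf value and ranking them by Shapley value can differ even for monotone Boolean functions. -/
open Finset

variable {V : Type*} [DecidableEq V]

/-- Shapley value of variable x in the Boolean function φ over variable set X. -/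
def shapley (X : Finset V) (φ : Finset V → Bool) (x : V) : ℚ :=
  ∑ Y ∈ (X \ {x}).powerset,
    ((Y.card.factorial * (X.card - Y.card - 1).factorial : ℚ) / (X.card.factorial : ℚ))
      * ((if φ (insert x Y) then 1 else 0) - (if φ Y then 1 else 0))

/-- Banzhaf-based and Shapley-based rankings can differ, even for monotone
Boolean functions: there are a monotone φ over X and variables x, y ∈ X with
Banzhaf(φ, x) > Banzhaf(φ, y) but Shapley(φ, x) < Shapley(φ, y). -/
theorem banzhaf_shapley_ranking_differ :
    ∃ (X : Finset ℕ) (φ : Finset ℕ → Bool) (x y : ℕ),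
      x ∈ X ∧ y ∈ X ∧
      (∀ Y Y' : Finset ℕ, Y ⊆ Y' → Y' ⊆ X → φ Y = true → φ Y' = true) ∧
      banzhaf X φ y < banzhaf X φ x ∧
      shapley X φ x < shapley X φ y := by
  refine ⟨range 7, fun Y => decide ((5 ∈ Y ∧ 2 ≤ (Y ∩ range 5).card ∧ (2 ∈ Y ∨ 3 ∈ Y ∨ 4 ∈ Y)) ∨
    (6 ∈ Y ∧ (0 ∈ Y ∨ 1 ∈ Y))), 5, 6, by decide, by decide, ?_, by decide +kernel,
    by decide +kernel⟩
  intro Y Y' h _ hY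
  have hc : (Y ∩ range 5).card ≤ (Y' ∩ range 5).card :=
    card_le_card (inter_subset_inter_right h)
  simp only [decide_eq_true_eq] at hY ⊢
  rcases hY with ⟨h5, h2, h3⟩ | ⟨h6, h0⟩
  · exact Or.inl ⟨h h5, h2.trans hc, h3.imp (@h 2) (Or.imp (@h 3) (@h 4))⟩
  · exact Or.inr ⟨h h6, h0.imp (@h 0) (@h 1)⟩
end
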